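/- arXiv:1512.08712 — 3 statements merged into one kernel-verified Lean document; each statement's English description precedes it below -/
import Mathlib

section
/- Let R be an invertible n²×n² matrix over k satisfying the quantum Yang–Baxter equation, and suppose R^{t₂} and (R⁻¹)^{t₁} are invertible. Then: (i) R₁₃·((R^{t₂})⁻¹)₁₂·(((R⁻¹)^{t₁})⁻¹)₂₃ = (((R⁻¹)^{t₁})⁻¹)₂₃·((R^{t₂})⁻¹)₁₂·R₁₃; (ii) R₂₃·(((R⁻¹)^{t₁})⁻¹)₁₂·(((R⁻¹)^{t₁})⁻¹)₁₃ = (((R⁻¹)^{t₁})⁻¹)₁₃·(((R⁻¹)^{t₁})⁻¹)₁₂·R₂₃. -/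
open Matrix

/-- Partial transpose in the first factor: `(M^{t₁})^{(i,j)}_{(k,l)} = M^{(k,j)}_{(i,l)}`. -/
def pt1 {α : Type*} {n : ℕ} (M : Matrix (Fin n × Fin n) (Fin n × Fin n) α) :
    Matrix (Fin n × Fin n) (Fin n × Fin n) α :=
  Matrix.of fun p q => M (q.1, p.2) (p.1, q.2)

/-- Partial transpose in the second factor: `(M^{t₂})^{(i,j)}_{(k,l)} = M^{(i,l)}_{(k,j)}`. -/
def pt2 {α : Type*} {n : ℕ} (M : Matrix (Fin n × Fin n) (Fin n × Fin n) α) :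
    Matrix (Fin n × Fin n) (Fin n × Fin n) α :=
  Matrix.of fun p q => M (p.1, q.2) (q.1, p.2)

/-- `M₁₂` acting on triples: `(M₁₂)^{(i,j,m)}_{(k,l,p)} = M^{(i,j)}_{(k,l)} δ_{mp}`. -/
def L12 {α : Type*} [Semiring α] {n : ℕ} (M : Matrix (Fin n × Fin n) (Fin n × Fin n) α) :
    Matrix (Fin n × Fin n × Fin n) (Fin n × Fin n × Fin n) α :=
  Matrix.of fun a b => if a.2.2 = b.2.2 then M (a.1, a.2.1) (b.1, b.2.1) else 0

/-- `M₂₃` acting on triples: `(M₂₃)^{(m,i,j)}_{(p,k,l)} = δ_{mp} M^{(i,j)}_{(k,l)}`. -/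
def L23 {α : Type*} [Semiring α] {n : ℕ} (M : Matrix (Fin n × Fin n) (Fin n × Fin n) α) :
    Matrix (Fin n × Fin n × Fin n) (Fin n × Fin n × Fin n) α :=
  Matrix.of fun a b => if a.1 = b.1 then M (a.2.1, a.2.2) (b.2.1, b.2.2) else 0

/-- `M₁₃` acting on triples: `(M₁₃)^{(i,m,j)}_{(k,p,l)} = δ_{mp} M^{(i,j)}_{(k,l)}`. -/
def L13 {α : Type*} [Semiring α] {n : ℕ} (M : Matrix (Fin n × Fin n) (Fin n × Fin n) α) :
    Matrix (Fin n × Fin n × Fin n) (Fin n × Fin n × Fin n) α :=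
  Matrix.of fun a b => if a.2.1 = b.2.1 then M (a.1, a.2.2) (b.1, b.2.2) else 0

/-!
A partial transpose in one tensor slot reverses a product of two matrices that share only that
slot, and it leaves a factor that does not act on the slot in place. Hence the transpose in the
second slot carries `R₂₃⁻¹ R₁₂ R₁₃ = R₁₃ R₁₂ R₂₃⁻¹`, and the transpose in the first slot carries
`R₂₃ R₁₂⁻¹ R₁₃⁻¹ = R₁₃⁻¹ R₁₂⁻¹ R₂₃`, to identities in `R^{t₂}` and `(R⁻¹)^{t₁}`; both are
rewritings of the Yang–Baxter equation. Inverting the two transposed factors gives (i) and (ii).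
-/

section NonsingInv

variable {m p α β : Type*} [Fintype m] [DecidableEq m] [Fintype p] [DecidableEq p]
  [CommRing α] [CommRing β]

lemma map_nonsing_inv (f : Matrix m m α →* Matrix p p β) {M : Matrix m m α} (hM : IsUnit M) :
    f M⁻¹ = (f M)⁻¹ := by
  obtain ⟨U, rfl⟩ := hM
  rw [← coe_units_inv, ← Units.coe_map_inv, coe_units_inv, Units.coe_map]

lemma mul_inv_mul_inv_eq_of_mul_mul_eq {A B C : Matrix m m α} (hA : IsUnit A) (hB : IsUnit B)
    (h : A * B * C = C * B * A) : C * A⁻¹ * B⁻¹ = B⁻¹ * A⁻¹ * C := by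
  obtain ⟨U, rfl⟩ := hA
  obtain ⟨V, rfl⟩ := hB
  have hC : SemiconjBy C ↑(V * U) ↑(U * V) := by
    simpa only [SemiconjBy, Units.val_mul, mul_assoc] using h.symm
  simpa only [SemiconjBy, _root_.mul_inv_rev, Units.val_mul, coe_units_inv, mul_assoc]
    using hC.units_inv_right.eq

lemma inv_mul_mul_eq_of_mul_mul_eq {A B C : Matrix m m α} (hC : IsUnit C)
    (h : A * B * C = C * B * A) : C⁻¹ * A * B = B * A * C⁻¹ := by
  obtain ⟨U, rfl⟩ := hC
  have hU : SemiconjBy (U : Matrix m m α) (B * A) (A * B) := by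
    simpa only [SemiconjBy, mul_assoc] using h.symm
  simpa only [coe_units_inv, mul_assoc] using hU.units_inv_symm_left.eq

end NonsingInv

section Embeddings

variable {α : Type*} [Semiring α] {n : ℕ}

/-- The embedding `M ↦ M₁₂` as a monoid homomorphism, so that it can be applied to units. -/
def L12Hom : Matrix (Fin n × Fin n) (Fin n × Fin n) α →*
    Matrix (Fin n × Fin n × Fin n) (Fin n × Fin n × Fin n) α where
  toFun := L12
  map_one' := by
    ext ⟨a, b, c⟩ ⟨d, e, f⟩
    simp only [L12, of_apply, one_apply, Prod.mk.injEq]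
    split_ifs <;> simp_all
  map_mul' M N := by
    ext ⟨a, b, c⟩ ⟨d, e, f⟩
    by_cases h : c = f <;> simp [L12, mul_apply, Fintype.sum_prod_type, h]

/-- The embedding `M ↦ M₁₃` as a monoid homomorphism, so that it can be applied to units. -/
def L13Hom : Matrix (Fin n × Fin n) (Fin n × Fin n) α →*
    Matrix (Fin n × Fin n × Fin n) (Fin n × Fin n × Fin n) α where
  toFun := L13
  map_one' := by
    ext ⟨a, b, c⟩ ⟨d, e, f⟩
    simp only [L13, of_apply, one_apply, Prod.mk.injEq]
    split_ifs <;> simp_all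
  map_mul' M N := by
    ext ⟨a, b, c⟩ ⟨d, e, f⟩
    by_cases h : b = e <;> simp [L13, mul_apply, Fintype.sum_prod_type, h]

/-- The embedding `M ↦ M₂₃` as a monoid homomorphism, so that it can be applied to units. -/
def L23Hom : Matrix (Fin n × Fin n) (Fin n × Fin n) α →*
    Matrix (Fin n × Fin n × Fin n) (Fin n × Fin n × Fin n) α where
  toFun := L23
  map_one' := by
    ext ⟨a, b, c⟩ ⟨d, e, f⟩
    simp only [L23, of_apply, one_apply, Prod.mk.injEq]
    split_ifs <;> simp_all
  map_mul' M N := by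
    ext ⟨a, b, c⟩ ⟨d, e, f⟩
    by_cases h : a = d <;> simp [L23, mul_apply, Fintype.sum_prod_type, h]

variable {M : Matrix (Fin n × Fin n) (Fin n × Fin n) α}

lemma isUnit_L12 (hM : IsUnit M) : IsUnit (L12 M) := hM.map L12Hom

lemma isUnit_L13 (hM : IsUnit M) : IsUnit (L13 M) := hM.map L13Hom

lemma isUnit_L23 (hM : IsUnit M) : IsUnit (L23 M) := hM.map L23Hom

end Embeddings

section EmbeddingsInv

variable {k : Type*} [CommRing k] {n : ℕ} {M : Matrix (Fin n × Fin n) (Fin n × Fin n) k}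

lemma L12_nonsing_inv (hM : IsUnit M) : L12 M⁻¹ = (L12 M)⁻¹ := map_nonsing_inv L12Hom hM

lemma L13_nonsing_inv (hM : IsUnit M) : L13 M⁻¹ = (L13 M)⁻¹ := map_nonsing_inv L13Hom hM

lemma L23_nonsing_inv (hM : IsUnit M) : L23 M⁻¹ = (L23 M)⁻¹ := map_nonsing_inv L23Hom hM

end EmbeddingsInv

/-- Partial transpose of a matrix indexed by triples in the first of the three factors; the
counterpart of `pt1` for triples. -/
def triplePt1 {ι κ μ α : Type*} (T : Matrix (ι × κ × μ) (ι × κ × μ) α) :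
    Matrix (ι × κ × μ) (ι × κ × μ) α :=
  of fun a b => T (b.1, a.2) (a.1, b.2)

/-- Partial transpose of a matrix indexed by triples in the second of the three factors; it
restricts to `pt2` on the image of `L12` and to `pt1` on the image of `L23`. -/
def triplePt2 {ι κ μ α : Type*} (T : Matrix (ι × κ × μ) (ι × κ × μ) α) :
    Matrix (ι × κ × μ) (ι × κ × μ) α :=
  of fun a b => T (a.1, b.2.1, a.2.2) (b.1, a.2.1, b.2.2)

section UntransposedFactor

variable {α : Type*} [Semiring α] {n : ℕ}
  (T : Matrix (Fin n × Fin n × Fin n) (Fin n × Fin n × Fin n) α)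
  (M : Matrix (Fin n × Fin n) (Fin n × Fin n) α)

lemma triplePt1_mul_L23 : triplePt1 (T * L23 M) = triplePt1 T * L23 M := by
  ext ⟨a, b, c⟩ ⟨d, e, f⟩
  simp [triplePt1, L23, mul_apply, Fintype.sum_prod_type]

lemma triplePt1_L23_mul : triplePt1 (L23 M * T) = L23 M * triplePt1 T := by
  ext ⟨a, b, c⟩ ⟨d, e, f⟩
  simp [triplePt1, L23, mul_apply, Fintype.sum_prod_type]

lemma triplePt2_mul_L13 : triplePt2 (T * L13 M) = triplePt2 T * L13 M := by
  ext ⟨a, b, c⟩ ⟨d, e, f⟩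
  simp [triplePt2, L13, mul_apply, Fintype.sum_prod_type]

lemma triplePt2_L13_mul : triplePt2 (L13 M * T) = L13 M * triplePt2 T := by
  ext ⟨a, b, c⟩ ⟨d, e, f⟩
  simp [triplePt2, L13, mul_apply, Fintype.sum_prod_type]

end UntransposedFactor

section SharedFactor

variable {α : Type*} [CommSemiring α] {n : ℕ}
  (M N : Matrix (Fin n × Fin n) (Fin n × Fin n) α)

lemma triplePt1_L12_mul_L13 : triplePt1 (L12 M * L13 N) = L13 (pt1 N) * L12 (pt1 M) := by
  ext ⟨a, b, c⟩ ⟨d, e, f⟩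
  simp [triplePt1, L12, L13, pt1, mul_apply, Fintype.sum_prod_type, mul_comm]

lemma triplePt1_L13_mul_L12 : triplePt1 (L13 M * L12 N) = L12 (pt1 N) * L13 (pt1 M) := by
  ext ⟨a, b, c⟩ ⟨d, e, f⟩
  simp [triplePt1, L12, L13, pt1, mul_apply, Fintype.sum_prod_type, mul_comm]

lemma triplePt2_L12_mul_L23 : triplePt2 (L12 M * L23 N) = L23 (pt1 N) * L12 (pt2 M) := by
  ext ⟨a, b, c⟩ ⟨d, e, f⟩
  simp [triplePt2, L12, L23, pt1, pt2, mul_apply, Fintype.sum_prod_type, mul_comm]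

lemma triplePt2_L23_mul_L12 : triplePt2 (L23 M * L12 N) = L12 (pt2 N) * L23 (pt1 M) := by
  ext ⟨a, b, c⟩ ⟨d, e, f⟩
  simp [triplePt2, L12, L23, pt1, pt2, mul_apply, Fintype.sum_prod_type, mul_comm]

end SharedFactor

section YangBaxter

variable {k : Type*} [CommRing k] {n : ℕ} {X Y Z : Matrix (Fin n × Fin n) (Fin n × Fin n) k}

lemma L13_mul_L12_pt2_inv_mul_L23_pt1_inv_of_yangBaxter
    (hYB : L12 X * L13 Y * L23 Z = L23 Z * L13 Y * L12 X)
    (hZ : IsUnit Z) (hX₂ : IsUnit (pt2 X)) (hZ₁ : IsUnit (pt1 Z⁻¹)) :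
    L13 Y * L12 (pt2 X)⁻¹ * L23 (pt1 Z⁻¹)⁻¹ = L23 (pt1 Z⁻¹)⁻¹ * L12 (pt2 X)⁻¹ * L13 Y := by
  have hYB_inv : L23 Z⁻¹ * L12 X * L13 Y = L13 Y * (L12 X * L23 Z⁻¹) := by
    simpa only [L23_nonsing_inv hZ, mul_assoc] using
      inv_mul_mul_eq_of_mul_mul_eq (isUnit_L23 hZ) hYB
  have transposed : L12 (pt2 X) * L23 (pt1 Z⁻¹) * L13 Y = L13 Y * L23 (pt1 Z⁻¹) * L12 (pt2 X) := by
    have := congrArg triplePt2 hYB_inv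
    rwa [triplePt2_mul_L13, triplePt2_L13_mul, triplePt2_L12_mul_L23, triplePt2_L23_mul_L12,
      ← mul_assoc] at this
  rw [L12_nonsing_inv hX₂, L23_nonsing_inv hZ₁]
  exact mul_inv_mul_inv_eq_of_mul_mul_eq (isUnit_L12 hX₂) (isUnit_L23 hZ₁) transposed

lemma L23_mul_L12_pt1_inv_mul_L13_pt1_inv_of_yangBaxter
    (hYB : L12 X * L13 Y * L23 Z = L23 Z * L13 Y * L12 X)
    (hX : IsUnit X) (hY : IsUnit Y) (hX₁ : IsUnit (pt1 X⁻¹)) (hY₁ : IsUnit (pt1 Y⁻¹)) :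
    L23 Z * L12 (pt1 X⁻¹)⁻¹ * L13 (pt1 Y⁻¹)⁻¹ = L13 (pt1 Y⁻¹)⁻¹ * L12 (pt1 X⁻¹)⁻¹ * L23 Z := by
  have hYB_inv : L23 Z * (L12 X⁻¹ * L13 Y⁻¹) = L13 Y⁻¹ * L12 X⁻¹ * L23 Z := by
    simpa only [L12_nonsing_inv hX, L13_nonsing_inv hY, mul_assoc] using
      mul_inv_mul_inv_eq_of_mul_mul_eq (isUnit_L12 hX) (isUnit_L13 hY) hYB
  have transposed : L12 (pt1 X⁻¹) * L13 (pt1 Y⁻¹) * L23 Z =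
      L23 Z * L13 (pt1 Y⁻¹) * L12 (pt1 X⁻¹) := by
    have := congrArg triplePt1 hYB_inv.symm
    rwa [triplePt1_mul_L23, triplePt1_L23_mul, triplePt1_L12_mul_L13, triplePt1_L13_mul_L12,
      ← mul_assoc] at this
  rw [L12_nonsing_inv hX₁, L13_nonsing_inv hY₁]
  exact mul_inv_mul_inv_eq_of_mul_mul_eq (isUnit_L12 hX₁) (isUnit_L13 hY₁) transposed

end YangBaxter

/-- if `R` is an invertible solution of the QYBE with `R^{t₂}` and `(R⁻¹)^{t₁}`
invertible, then
(i) `R₁₃·((R^{t₂})⁻¹)₁₂·(((R⁻¹)^{t₁})⁻¹)₂₃ = (((R⁻¹)^{t₁})⁻¹)₂₃·((R^{t₂})⁻¹)₁₂·R₁₃`;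
(ii) `R₂₃·(((R⁻¹)^{t₁})⁻¹)₁₂·(((R⁻¹)^{t₁})⁻¹)₁₃ = (((R⁻¹)^{t₁})⁻¹)₁₃·(((R⁻¹)^{t₁})⁻¹)₁₂·R₂₃`. -/
theorem stmt2 {k : Type*} [CommRing k] {n : ℕ} (hn : 0 < n)
    (R : Matrix (Fin n × Fin n) (Fin n × Fin n) k)
    (hR : IsUnit R)
    (hQYBE : L12 R * L13 R * L23 R = L23 R * L13 R * L12 R)
    (ht2 : IsUnit (pt2 R)) (ht1 : IsUnit (pt1 R⁻¹)) :
    (L13 R * L12 (pt2 R)⁻¹ * L23 (pt1 R⁻¹)⁻¹ = L23 (pt1 R⁻¹)⁻¹ * L12 (pt2 R)⁻¹ * L13 R) ∧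
    (L23 R * L12 (pt1 R⁻¹)⁻¹ * L13 (pt1 R⁻¹)⁻¹ = L13 (pt1 R⁻¹)⁻¹ * L12 (pt1 R⁻¹)⁻¹ * L23 R) :=
  ⟨L13_mul_L12_pt2_inv_mul_L23_pt1_inv_of_yangBaxter hQYBE hR ht2 ht1,
    L23_mul_L12_pt1_inv_mul_L13_pt1_inv_of_yangBaxter hQYBE hR hR ht1 ht1⟩
end

section
/- Let R be an n²×n² matrix over k and let m be an n×n matrix over S which is invertible in the matrix ring Mₙ(S). Then R·m₁·m₂ = m₂·m₁·R if and only if m₁·((m⁻¹)ᵗ)₂·R^{t₂} = R^{t₂}·((m⁻¹)ᵗ)₂·m₁. -/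
open Matrix

/-- For an `n×n` matrix `m` over `S`, the `n²×n²` matrix `m₁` with entries
`(m₁)^{(i,j)}_{(k,l)} = m^i_k δ_{jl}`. -/
def matLift1 {S : Type*} [Semiring S] {n : ℕ} (m : Matrix (Fin n) (Fin n) S) :
    Matrix (Fin n × Fin n) (Fin n × Fin n) S :=
  Matrix.of fun p q => if p.2 = q.2 then m p.1 q.1 else 0

/-- For an `n×n` matrix `m` over `S`, the `n²×n²` matrix `m₂` with entries
`(m₂)^{(i,j)}_{(k,l)} = δ_{ik} m^j_l`. -/
def matLift2 {S : Type*} [Semiring S] {n : ℕ} (m : Matrix (Fin n) (Fin n) S) :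
    Matrix (Fin n × Fin n) (Fin n × Fin n) S :=
  Matrix.of fun p q => if p.1 = q.1 then m p.2 q.2 else 0

/-!
Partial transposition in the second factor commutes with multiplication by `x₁` on either side and,
on matrices whose entries commute with those of `w`, exchanges multiplication by `w₂` on one side
with multiplication by `(wᵗ)₂` on the other. So the second relation is the partial transpose of
`m₁ R (m⁻¹)₂ = (m⁻¹)₂ R m₁`, which is the first one multiplied by `(m⁻¹)₂` on both sides.
-/

section Lifts

variable {S : Type*} [Semiring S] {n : ℕ}

theorem matLift1_mul_apply (x : Matrix (Fin n) (Fin n) S)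
    (A : Matrix (Fin n × Fin n) (Fin n × Fin n) S) (p q : Fin n × Fin n) :
    (matLift1 x * A) p q = ∑ a, x p.1 a * A (a, p.2) q := by
  simp [mul_apply, matLift1, Fintype.sum_prod_type]

theorem mul_matLift1_apply (A : Matrix (Fin n × Fin n) (Fin n × Fin n) S)
    (x : Matrix (Fin n) (Fin n) S) (p q : Fin n × Fin n) :
    (A * matLift1 x) p q = ∑ a, A p (a, q.2) * x a q.1 := by
  simp [mul_apply, matLift1, Fintype.sum_prod_type]

theorem matLift2_mul_apply (w : Matrix (Fin n) (Fin n) S)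
    (A : Matrix (Fin n × Fin n) (Fin n × Fin n) S) (p q : Fin n × Fin n) :
    (matLift2 w * A) p q = ∑ b, w p.2 b * A (p.1, b) q := by
  simp [mul_apply, matLift2, Fintype.sum_prod_type_right]

theorem mul_matLift2_apply (A : Matrix (Fin n × Fin n) (Fin n × Fin n) S)
    (w : Matrix (Fin n) (Fin n) S) (p q : Fin n × Fin n) :
    (A * matLift2 w) p q = ∑ b, A p (q.1, b) * w b q.2 := by
  simp [mul_apply, matLift2, Fintype.sum_prod_type_right]

theorem matLift2_one : matLift2 (1 : Matrix (Fin n) (Fin n) S) = 1 := by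
  ext p q
  simp [matLift2, one_apply, Prod.ext_iff, ite_and]

theorem matLift2_mul (a b : Matrix (Fin n) (Fin n) S) :
    matLift2 (a * b) = matLift2 a * matLift2 b := by
  ext p q
  rw [matLift2_mul_apply]
  by_cases h : p.1 = q.1 <;> simp [matLift2, mul_apply, h]

end Lifts

section PartialTranspose

theorem pt2_involutive {α : Type*} {n : ℕ} :
    Function.Involutive (pt2 (α := α) (n := n)) :=
  fun _ => rfl

variable {S : Type*} [Semiring S] {n : ℕ}

theorem pt2_matLift1_mul (x : Matrix (Fin n) (Fin n) S)
    (A : Matrix (Fin n × Fin n) (Fin n × Fin n) S) :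
    pt2 (matLift1 x * A) = matLift1 x * pt2 A := by
  ext p q
  simp only [pt2, of_apply, matLift1_mul_apply]

theorem pt2_mul_matLift1 (A : Matrix (Fin n × Fin n) (Fin n × Fin n) S)
    (x : Matrix (Fin n) (Fin n) S) :
    pt2 (A * matLift1 x) = pt2 A * matLift1 x := by
  ext p q
  simp only [pt2, of_apply, mul_matLift1_apply]

theorem pt2_matLift2_mul {A : Matrix (Fin n × Fin n) (Fin n × Fin n) S}
    {w : Matrix (Fin n) (Fin n) S} (hAw : ∀ p q i j, Commute (A p q) (w i j)) :
    pt2 (matLift2 w * A) = pt2 A * matLift2 wᵀ := by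
  ext p q
  simp only [pt2, of_apply, matLift2_mul_apply, mul_matLift2_apply, transpose_apply,
    (hAw _ _ _ _).eq]

theorem pt2_mul_matLift2 {A : Matrix (Fin n × Fin n) (Fin n × Fin n) S}
    {w : Matrix (Fin n) (Fin n) S} (hAw : ∀ p q i j, Commute (A p q) (w i j)) :
    pt2 (A * matLift2 w) = matLift2 wᵀ * pt2 A := by
  ext p q
  simp only [pt2, of_apply, matLift2_mul_apply, mul_matLift2_apply, transpose_apply,
    (hAw _ _ _ _).eq]

end PartialTranspose

theorem mul_mul_units_eq_iff {M : Type*} [Monoid M] (a b : M) (u : Mˣ) :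
    a * b * u = u * b * a ↔ b * a * ↑u⁻¹ = ↑u⁻¹ * a * b := by
  have h : SemiconjBy ↑u⁻¹ (a * b) (b * a) ↔ SemiconjBy ↑u (b * a) (a * b) :=
    SemiconjBy.units_inv_symm_left_iff
  simpa only [SemiconjBy, mul_assoc, eq_comm] using h.symm

theorem stmt7_general {S : Type*} [Semiring S] {n : ℕ}
    (R : Matrix (Fin n × Fin n) (Fin n × Fin n) S)
    (x m minv : Matrix (Fin n) (Fin n) S)
    (hm1 : m * minv = 1) (hm2 : minv * m = 1)
    (hR : ∀ p q i j, Commute (R p q) (minv i j)) :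
    R * matLift1 x * matLift2 m = matLift2 m * matLift1 x * R ↔
      matLift1 x * matLift2 minvᵀ * pt2 R = pt2 R * matLift2 minvᵀ * matLift1 x := by
  let u : (Matrix (Fin n × Fin n) (Fin n × Fin n) S)ˣ :=
    { val := matLift2 m
      inv := matLift2 minv
      val_inv := by rw [← matLift2_mul, hm1, matLift2_one]
      inv_val := by rw [← matLift2_mul, hm2, matLift2_one] }
  have lhs_eq_pt2 : matLift1 x * matLift2 minvᵀ * pt2 R =
      pt2 (matLift1 x * R * matLift2 minv) := by
    rw [mul_assoc, mul_assoc, pt2_matLift1_mul, pt2_mul_matLift2 hR]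
  have rhs_eq_pt2 : pt2 R * matLift2 minvᵀ * matLift1 x =
      pt2 (matLift2 minv * R * matLift1 x) := by
    rw [pt2_mul_matLift1, pt2_matLift2_mul hR]
  rw [lhs_eq_pt2, rhs_eq_pt2, pt2_involutive.injective.eq_iff]
  exact mul_mul_units_eq_iff R (matLift1 x) u

/-- for `m` invertible in `Mₙ(S)` (with two-sided inverse `minv`):
`R·m₁·m₂ = m₂·m₁·R ↔ m₁·((m⁻¹)ᵗ)₂·R^{t₂} = R^{t₂}·((m⁻¹)ᵗ)₂·m₁`. -/
theorem stmt7 {k S : Type*} [CommRing k] [Ring S] [Algebra k S] {n : ℕ} (hn : 0 < n)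
    (R : Matrix (Fin n × Fin n) (Fin n × Fin n) k)
    (m minv : Matrix (Fin n) (Fin n) S)
    (hm1 : m * minv = 1) (hm2 : minv * m = 1) :
    R.map (algebraMap k S) * matLift1 m * matLift2 m =
        matLift2 m * matLift1 m * R.map (algebraMap k S) ↔
      matLift1 m * matLift2 minvᵀ * pt2 (R.map (algebraMap k S)) =
        pt2 (R.map (algebraMap k S)) * matLift2 minvᵀ * matLift1 m := by
  exact stmt7_general _ m m minv hm1 hm2 fun p q i j => Algebra.commutes (R p q) (minv i j)
end

section
/- Let R be an invertible n²×n² matrix over k such that (R⁻¹)^{t₁} is invertible, let m⁺ be an n×n matrix over S which is invertible in Mₙ(S), and let m⁻ be any n×n matrix over S. Then R·m⁺₁·m⁻₂ = m⁻₂·m⁺₁·R if and only if ((R⁻¹)^{t₁})⁻¹·m⁻₂·(((m⁺)⁻¹)ᵗ)₁ = (((m⁺)⁻¹)ᵗ)₁·m⁻₂·((R⁻¹)^{t₁})⁻¹. -/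
open Matrix

/-! Each relation is carried to the other by inverting `R`, then `m⁺₁`, then `(R⁻¹)^{t₁}`, with one
partial transpose in between: `^{t₁}` leaves factors `b₂` in place and moves a factor `c₁` to the
other side as `(cᵗ)₁`, provided the entries of `c` commute with those of the remaining factor. -/

section PartialTranspose

variable {S : Type*} [Semiring S] {n : ℕ}

theorem matLift1_eq_blockDiagonal (m : Matrix (Fin n) (Fin n) S) :
    matLift1 m = blockDiagonal fun _ => m :=
  rfl

/-- The lift `m ↦ m₁` as a monoid homomorphism; it carries invertible matrices to invertible
matrices. -/
def matLift1Hom : Matrix (Fin n) (Fin n) S →* Matrix (Fin n × Fin n) (Fin n × Fin n) S where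
  toFun := matLift1
  map_one' := blockDiagonal_one
  map_mul' a b := by simp only [matLift1_eq_blockDiagonal, blockDiagonal_mul]

section Entries

variable (m : Matrix (Fin n) (Fin n) S) (M : Matrix (Fin n × Fin n) (Fin n × Fin n) S)
  (p q : Fin n × Fin n)

theorem matLift1_mul_apply_s8 : (matLift1 m * M) p q = ∑ s, m p.1 s * M (s, p.2) q := by
  simp [mul_apply, matLift1, Fintype.sum_prod_type]

theorem mul_matLift1_apply_s8 : (M * matLift1 m) p q = ∑ s, M p (s, q.2) * m s q.1 := by
  simp [mul_apply, matLift1, Fintype.sum_prod_type]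

theorem matLift2_mul_apply_s8 : (matLift2 m * M) p q = ∑ s, m p.2 s * M (p.1, s) q := by
  simp [mul_apply, matLift2, Fintype.sum_prod_type_right]

theorem mul_matLift2_apply_s8 : (M * matLift2 m) p q = ∑ s, M p (q.1, s) * m s q.2 := by
  simp [mul_apply, matLift2, Fintype.sum_prod_type_right]

end Entries

theorem pt1_involutive {α : Type*} :
    Function.Involutive (pt1 : Matrix (Fin n × Fin n) (Fin n × Fin n) α → _) :=
  fun _ => rfl

theorem pt1_matLift2_mul (b : Matrix (Fin n) (Fin n) S)
    (M : Matrix (Fin n × Fin n) (Fin n × Fin n) S) :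
    pt1 (matLift2 b * M) = matLift2 b * pt1 M := by
  ext p q
  simp only [pt1, of_apply, matLift2_mul_apply_s8]

theorem pt1_mul_matLift2 (M : Matrix (Fin n × Fin n) (Fin n × Fin n) S)
    (b : Matrix (Fin n) (Fin n) S) :
    pt1 (M * matLift2 b) = pt1 M * matLift2 b := by
  ext p q
  simp only [pt1, of_apply, mul_matLift2_apply_s8]

theorem pt1_matLift1_mul {c : Matrix (Fin n) (Fin n) S}
    {M : Matrix (Fin n × Fin n) (Fin n × Fin n) S}
    (hcM : ∀ i j p q, Commute (c i j) (M p q)) :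
    pt1 (matLift1 c * M) = pt1 M * matLift1 cᵀ := by
  ext p q
  simp only [pt1, of_apply, matLift1_mul_apply_s8, mul_matLift1_apply_s8, transpose_apply,
    (hcM _ _ _ _).eq]

theorem pt1_mul_matLift1 {c : Matrix (Fin n) (Fin n) S}
    {M : Matrix (Fin n × Fin n) (Fin n × Fin n) S}
    (hcM : ∀ i j p q, Commute (c i j) (M p q)) :
    pt1 (M * matLift1 c) = matLift1 cᵀ * pt1 M := by
  ext p q
  simp only [pt1, of_apply, matLift1_mul_apply_s8, mul_matLift1_apply_s8, transpose_apply,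
    (hcM _ _ _ _).eq]

theorem semiconjBy_matLift1_iff_semiconjBy_pt1 {c : Matrix (Fin n) (Fin n) S}
    {M : Matrix (Fin n × Fin n) (Fin n × Fin n) S}
    (hcM : ∀ i j p q, Commute (c i j) (M p q)) (b : Matrix (Fin n) (Fin n) S) :
    SemiconjBy (matLift1 c) (M * matLift2 b) (matLift2 b * M) ↔
      SemiconjBy (pt1 M) (matLift1 cᵀ * matLift2 b) (matLift2 b * matLift1 cᵀ) := by
  unfold SemiconjBy
  rw [← pt1_involutive.injective.eq_iff, ← mul_assoc, pt1_mul_matLift2, pt1_matLift1_mul hcM,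
    mul_assoc (matLift2 b), pt1_matLift2_mul, pt1_mul_matLift1 hcM, mul_assoc, mul_assoc]

theorem stmt8_general (R P : (Matrix (Fin n × Fin n) (Fin n × Fin n) S)ˣ)
    (hP : P.val = pt1 R⁻¹.val) (mp : (Matrix (Fin n) (Fin n) S)ˣ) (mm : Matrix (Fin n) (Fin n) S)
    (hcomm : ∀ i j p q, Commute (mp⁻¹.val i j) (R⁻¹.val p q)) :
    R.val * matLift1 mp.val * matLift2 mm = matLift2 mm * matLift1 mp.val * R.val ↔
      P⁻¹.val * matLift2 mm * matLift1 mp⁻¹.valᵀ =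
        matLift1 mp⁻¹.valᵀ * matLift2 mm * P⁻¹.val := by
  let mp₁ := Units.map matLift1Hom mp
  calc
    _ ↔ SemiconjBy R.val (mp₁.val * matLift2 mm) (matLift2 mm * mp₁.val) := by
      rw [SemiconjBy, ← mul_assoc]; rfl
    _ ↔ SemiconjBy R⁻¹.val (matLift2 mm * mp₁.val) (mp₁.val * matLift2 mm) :=
      SemiconjBy.units_inv_symm_left_iff.symm
    _ ↔ SemiconjBy mp₁.val (matLift2 mm * R⁻¹.val) (R⁻¹.val * matLift2 mm) := by
      simp only [SemiconjBy, mul_assoc]; exact eq_comm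
    _ ↔ SemiconjBy mp₁⁻¹.val (R⁻¹.val * matLift2 mm) (matLift2 mm * R⁻¹.val) :=
      SemiconjBy.units_inv_symm_left_iff.symm
    _ ↔ SemiconjBy P.val (matLift1 mp⁻¹.valᵀ * matLift2 mm) (matLift2 mm * matLift1 mp⁻¹.valᵀ) :=
      hP ▸ semiconjBy_matLift1_iff_semiconjBy_pt1 hcomm mm
    _ ↔ SemiconjBy P⁻¹.val (matLift2 mm * matLift1 mp⁻¹.valᵀ) (matLift1 mp⁻¹.valᵀ * matLift2 mm) :=
      SemiconjBy.units_inv_symm_left_iff.symm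
    _ ↔ _ := by rw [SemiconjBy, ← mul_assoc]

end PartialTranspose

/-- for `R` invertible over `k` with `(R⁻¹)^{t₁}` invertible, `m⁺` invertible in
`Mₙ(S)` (two-sided inverse `mpinv`) and `m⁻` arbitrary:
`R·m⁺₁·m⁻₂ = m⁻₂·m⁺₁·R ↔
  ((R⁻¹)^{t₁})⁻¹·m⁻₂·(((m⁺)⁻¹)ᵗ)₁ = (((m⁺)⁻¹)ᵗ)₁·m⁻₂·((R⁻¹)^{t₁})⁻¹`. -/
theorem stmt8 {k S : Type*} [CommRing k] [Ring S] [Algebra k S] {n : ℕ} (hn : 0 < n)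
    (R : Matrix (Fin n × Fin n) (Fin n × Fin n) k)
    (hR : IsUnit R) (ht1 : IsUnit (pt1 R⁻¹))
    (mp mpinv mm : Matrix (Fin n) (Fin n) S)
    (hmp1 : mp * mpinv = 1) (hmp2 : mpinv * mp = 1) :
    R.map (algebraMap k S) * matLift1 mp * matLift2 mm =
        matLift2 mm * matLift1 mp * R.map (algebraMap k S) ↔
      ((pt1 R⁻¹)⁻¹).map (algebraMap k S) * matLift2 mm * matLift1 mpinvᵀ =
        matLift1 mpinvᵀ * matLift2 mm * ((pt1 R⁻¹)⁻¹).map (algebraMap k S) := by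
  obtain ⟨R, rfl⟩ := hR
  obtain ⟨P, hP⟩ := ht1
  rw [← coe_units_inv] at hP ⊢
  rw [← hP, ← coe_units_inv]
  let toS := Units.map ((algebraMap k S).mapMatrix (m := Fin n × Fin n)).toMonoidHom
  exact stmt8_general (toS R) (toS P) (congrArg (·.map (algebraMap k S)) hP)
    ⟨mp, mpinv, hmp1, hmp2⟩ mm fun _ _ _ _ => (Algebra.commutes _ _).symm
end
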